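/- arXiv:1210.8413 — 4 statements merged into one kernel-verified Lean document; each statement's English description precedes it below -/
import Mathlib

section
/- Let K be a field of characteristic 0 and let p, q ∈ Kˣ, neither of which is a root of unity. Let θ : A_1^p(K) → A_1^q(K) be a K-algebra isomorphism, let X, Y denote the images in A_1^p(K) of the two free generators, and let x, y denote those in A_1^q(K). Then θ(X) and θ(Y) both lie in the K-linear span of {1, x, y}; that is, there exist α, β, γ, α', β', γ' ∈ K with θ(X) = α·x + β·y + γ·1 and θ(Y) = α'·x + β'·y + γ'·1. -/
/-- The defining relation of the quantum Weyl algebra `A_1^q(K)`: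
`x * y = q • (y * x) + 1`, where `x, y` are the two free generators. -/
inductive WeylRel (K : Type*) [Field K] (q : K) :
    FreeAlgebra K (Fin 2) → FreeAlgebra K (Fin 2) → Prop
  | rel : WeylRel K q (FreeAlgebra.ι K 0 * FreeAlgebra.ι K 1)
      (q • (FreeAlgebra.ι K 1 * FreeAlgebra.ι K 0) + 1)

/-- The quantum Weyl algebra `A_1^q(K)`. -/
abbrev QuantumWeyl (K : Type*) [Field K] (q : K) := RingQuot (WeylRel K q)

/-- The images of the two free generators in `A_1^q(K)`; `wgen K q 0` is `x`
and `wgen K q 1` is `y`. -/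
noncomputable def wgen (K : Type*) [Field K] (q : K) (i : Fin 2) : QuantumWeyl K q :=
  RingQuot.mkAlgHom K (WeylRel K q) (FreeAlgebra.ι K i)



section QW

open Polynomial

/-- A copy of the infinite cyclic group, acting on `K[X]` through `X ↦ q X`. -/
def QZ {K : Type*} [Field K] (_q : Kˣ) : Type := Multiplicative ℤ

instance {K : Type*} [Field K] (q : Kˣ) : CommGroup (QZ q) :=
  inferInstanceAs (CommGroup (Multiplicative ℤ))

instance {K : Type*} [Field K] (q : Kˣ) : TwoUniqueProds (QZ q) :=
  inferInstanceAs (TwoUniqueProds (Multiplicative ℤ))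

/-- the element of `QZ q` given by an integer -/
def qz {K : Type*} [Field K] (q : Kˣ) (n : ℤ) : QZ q := Multiplicative.ofAdd n

/-- the integer given by an element of `QZ q` -/
def qzInt {K : Type*} [Field K] {q : Kˣ} (n : QZ q) : ℤ := Multiplicative.toAdd n

variable {K : Type*} [Field K] (q : Kˣ)

theorem qz_add (m n : ℤ) : qz q (m + n) = qz q m * qz q n := rfl
theorem qz_zero : qz q 0 = 1 := rfl
theorem qz_neg (m : ℤ) : qz q (-m) = (qz q m)⁻¹ := rfl
theorem qz_qzInt (n : QZ q) : qz q (qzInt n) = n := rfl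
theorem qz_inj {m n : ℤ} : qz q m = qz q n ↔ m = n := Iff.rfl

/-- the automorphism -/
noncomputable def sig (n : QZ q) : K[X] →ₐ[K] K[X] := aeval (C ((q ^ qzInt n : Kˣ) : K) * X)

noncomputable instance : MulSemiringAction (QZ q) K[X] where
  smul n f := sig q n f
  one_smul f := by
    change sig q 1 f = f
    have : sig q 1 = AlgHom.id K _ := by
      ext1; simp [sig, qzInt, show Multiplicative.toAdd (1 : QZ q) = 0 from rfl]
    rw [this]; rfl
  mul_smul a b f := by
    change sig q (a * b) f = sig q a (sig q b f)
    have : sig q (a * b) = (sig q a).comp (sig q b) := by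
      ext1
      have : qzInt (a * b) = qzInt a + qzInt b := rfl
      simp only [sig, aeval_X, this, zpow_add, AlgHom.comp_apply, map_mul, Units.val_mul]
      simp; ring
    rw [this]; rfl
  smul_zero a := map_zero (sig q a)
  smul_add a := map_add (sig q a)
  smul_one a := map_one (sig q a)
  smul_mul a := map_mul (sig q a)

theorem qsmul_def (n : QZ q) (f : K[X]) : n • f = sig q n f := rfl

theorem qz_smul_X (n : ℤ) : qz q n • (X : K[X]) = C ((q ^ n : Kˣ) : K) * X := by
  rw [qsmul_def, sig, aeval_X]; rfl

theorem qsmul_C (n : QZ q) (c : K) : n • (C c : K[X]) = C c := by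
  rw [qsmul_def]; exact (sig q n).commutes c

instance : SMulCommClass (QZ q) K K[X] where
  smul_comm n c f := map_smul (sig q n) c f

theorem natDegree_qsmul (n : QZ q) (f : K[X]) : (n • f).natDegree = f.natDegree := by
  have : n • f = f.comp (C ((q ^ qzInt n : Kˣ) : K) * X) := by
    rw [qsmul_def, sig, aeval_def, comp]; rfl
  rw [this, natDegree_comp, natDegree_C_mul_X _ (Units.ne_zero _), mul_one]

/-- the quantum torus -/
abbrev QT := SkewMonoidAlgebra K[X] (QZ q)

/-- homogeneous elements of the torus -/
noncomputable def sg (n : ℤ) (f : K[X]) : QT q := SkewMonoidAlgebra.single (qz q n) f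

theorem sg_mul (m n : ℤ) (f g : K[X]) : sg q m f * sg q n g = sg q (m + n) (f * (qz q m • g)) := by
  simp [sg, SkewMonoidAlgebra.single_mul_single, qz_add]

theorem sg_add (n : ℤ) (f g : K[X]) : sg q n f + sg q n g = sg q n (f + g) := by
  simp [sg]

theorem sg_one : sg q 0 1 = 1 := rfl

theorem sg_smul (n : ℤ) (c : K) (f : K[X]) : c • sg q n f = sg q n (c • f) := by
  simp [sg, SkewMonoidAlgebra.smul_single]

theorem sg_inj (n : ℤ) {f g : K[X]} (h : sg q n f = sg q n g) : f = g :=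
  SkewMonoidAlgebra.single_injective _ h

theorem sg_coeff_self (n : ℤ) (f : K[X]) : (sg q n f).coeff (qz q n) = f := by
  simp [sg]

theorem eq_sg (u : QT q) (n : ℤ) (h : ∀ m : ℤ, m ≠ n → u.coeff (qz q m) = 0) :
    u = sg q n (u.coeff (qz q n)) := by
  ext1 c
  by_cases hc : c = qz q n
  · subst hc; exact (sg_coeff_self q _ _).symm
  · have h1 := h (qzInt c) (fun h => hc (by rw [← h]; rfl))
    rw [qz_qzInt] at h1
    rw [h1, sg, SkewMonoidAlgebra.coeff_single, Finsupp.single_eq_of_ne hc]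

theorem qsmul_ne_zero (n : QZ q) {f : K[X]} (h : f ≠ 0) : n • f ≠ 0 := by
  rwa [Ne, smul_eq_zero_iff_eq]

theorem coeff_unique {u v : QT q} {a b : QZ q} (h : UniqueMul u.support v.support a b) :
    (u * v).coeff (a * b) = u.coeff a * a • v.coeff b := by
  classical
  rw [SkewMonoidAlgebra.coeff_mul_left, SkewMonoidAlgebra.sum_def', Finset.sum_eq_single a]
  · simp
  · intro c hc hca
    have : v.coeff (c⁻¹ * (a * b)) = 0 := by
      by_contra h0
      exact hca (h hc (SkewMonoidAlgebra.mem_support_iff.2 h0) (by group)).1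
    rw [this, smul_zero, mul_zero]
  · intro ha
    rw [SkewMonoidAlgebra.notMem_support_iff] at ha
    rw [ha, zero_mul]

theorem torus_unit {u v : QT q} (h : u * v = 1) :
    ∃ (n : ℤ) (f g : K[X]), u = sg q n f ∧ v = sg q (-n) g ∧ IsUnit f ∧ IsUnit g := by
  classical
  have hu : u ≠ 0 := by rintro rfl; simp at h
  have hv : v ≠ 0 := by rintro rfl; simp at h
  have key : ∀ a ∈ u.support, ∀ b ∈ v.support, UniqueMul u.support v.support a b → a * b = 1 := by
    intro a ha b hb hab
    have := coeff_unique q hab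
    by_contra h1
    rw [h] at this
    have h0 : (1 : QT q).coeff (a * b) = 0 := by
      rw [SkewMonoidAlgebra.coeff_one, Finsupp.single_eq_of_ne h1]
    rw [h0] at this
    rw [SkewMonoidAlgebra.mem_support_iff] at ha hb
    exact mul_ne_zero ha (qsmul_ne_zero q a hb) this.symm
  have hcard : ¬ 1 < u.support.card * v.support.card := by
    intro hlt
    obtain ⟨p1, h1, p2, h2, hne, u1, u2⟩ := TwoUniqueProds.uniqueMul_of_one_lt_card hlt
    rw [Finset.mem_product] at h1 h2
    have e1 := key _ h1.1 _ h1.2 u1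
    have e2 := key _ h2.1 _ h2.2 u2
    have := u1 h2.1 h2.2 (e2.trans e1.symm)
    exact hne (Prod.ext this.1.symm this.2.symm)
  have cu : 0 < u.support.card := by
    rw [Finset.card_pos, Finset.nonempty_iff_ne_empty, Ne, SkewMonoidAlgebra.support_eq_empty]
    exact hu
  have cv : 0 < v.support.card := by
    rw [Finset.card_pos, Finset.nonempty_iff_ne_empty, Ne, SkewMonoidAlgebra.support_eq_empty]
    exact hv
  have c1 : u.support.card = 1 := by nlinarith
  have c2 : v.support.card = 1 := by nlinarith
  obtain ⟨a, ha⟩ := Finset.card_eq_one.1 c1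
  obtain ⟨b, hb⟩ := Finset.card_eq_one.1 c2
  have hab := key a (by simp [ha]) b (by simp [hb]) (by
    rw [ha, hb]; intro c d hc hd _; simp at hc hd; exact ⟨hc, hd⟩)
  have hb' : b = a⁻¹ := eq_inv_of_mul_eq_one_right hab
  subst hb'
  have eu : u = sg q (qzInt a) (u.coeff a) := eq_sg q u _ (fun m hm => by
    rw [SkewMonoidAlgebra.notMem_support_iff.1]
    rw [ha, Finset.mem_singleton]
    exact fun h => hm h)
  have ev : v = sg q (-qzInt a) (v.coeff a⁻¹) := eq_sg q v _ (fun m hm => by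
    rw [SkewMonoidAlgebra.notMem_support_iff.1]
    rw [hb, Finset.mem_singleton]
    exact fun h => hm h)
  refine ⟨qzInt a, _, _, eu, ev, ?_⟩
  rw [eu, ev, sg_mul, add_neg_cancel, ← sg_one] at h
  have h' := sg_inj q 0 h
  refine ⟨IsUnit.of_mul_eq_one _ h', ?_⟩
  have := IsUnit.of_mul_eq_one _ ((mul_comm _ _).trans h')
  have h3 := this.map (MulSemiringAction.toRingHom (QZ q) K[X] (a⁻¹))
  simp only [MulSemiringAction.toRingHom_apply, qz_qzInt, inv_smul_smul] at h3
  exact h3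

/-! ### The algebra -/

theorem wgen_rel : wgen K (q : K) 0 * wgen K (q : K) 1 =
    (q : K) • (wgen K (q : K) 1 * wgen K (q : K) 0) + 1 := by
  have := RingQuot.mkAlgHom_rel K (WeylRel.rel (K := K) (q := (q : K)))
  simpa [wgen] using this

theorem qw_induction {P : QuantumWeyl K (q : K) → Prop}
    (hC : ∀ c : K, P (algebraMap K _ c)) (hx : P (wgen K (q : K) 0)) (hy : P (wgen K (q : K) 1))
    (hadd : ∀ a b, P a → P b → P (a + b)) (hmul : ∀ a b, P a → P b → P (a * b)) (a) : P a := by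
  obtain ⟨a, rfl⟩ := RingQuot.mkAlgHom_surjective K (WeylRel K (q : K)) a
  induction a using FreeAlgebra.induction with
  | grade0 r => rw [AlgHom.commutes]; exact hC r
  | grade1 i => fin_cases i; exacts [hx, hy]
  | mul a b ha hb => rw [map_mul]; exact hmul _ _ ha hb
  | add a b ha hb => rw [map_add]; exact hadd _ _ ha hb

/-- the normal element -/
noncomputable def zz : QuantumWeyl K (q : K) :=
  1 + ((q : K) - 1) • (wgen K (q : K) 1 * wgen K (q : K) 0)

theorem zz_comm : wgen K (q : K) 0 * wgen K (q : K) 1 =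
    wgen K (q : K) 1 * wgen K (q : K) 0 + zz q := by
  rw [wgen_rel, zz]; module

theorem x_zz : wgen K (q : K) 0 * zz q = (q : K) • (zz q * wgen K (q : K) 0) := by
  have h : wgen K (q : K) 0 * (wgen K (q : K) 1 * wgen K (q : K) 0) =
    (q : K) • (wgen K (q : K) 1 * wgen K (q : K) 0 * wgen K (q : K) 0) + wgen K (q : K) 0 := by
    rw [← mul_assoc, wgen_rel]; simp [add_mul]
  rw [zz]
  simp only [mul_add, mul_one, add_mul, one_mul, mul_smul_comm, smul_mul_assoc, h]
  module

theorem zz_y : zz q * wgen K (q : K) 1 = (q : K) • (wgen K (q : K) 1 * zz q) := by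
  have h : (wgen K (q : K) 1 * wgen K (q : K) 0) * wgen K (q : K) 1 =
    (q : K) • (wgen K (q : K) 1 * (wgen K (q : K) 1 * wgen K (q : K) 0)) + wgen K (q : K) 1 := by
    rw [mul_assoc, wgen_rel]; simp [mul_add]
  rw [zz]
  simp only [mul_add, mul_one, add_mul, one_mul, mul_smul_comm, smul_mul_assoc, h]
  module

theorem y_zz : wgen K (q : K) 1 * zz q = ((q⁻¹ : Kˣ) : K) • (zz q * wgen K (q : K) 1) := by
  rw [zz_y, smul_smul]; simp

theorem zz_normal (a : QuantumWeyl K (q : K)) : ∃ b, a * zz q = zz q * b := by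
  induction a using qw_induction with
  | hC c => exact ⟨algebraMap K _ c, Algebra.commutes _ _⟩
  | hx => exact ⟨(q : K) • wgen K (q : K) 0, by rw [x_zz, mul_smul_comm]⟩
  | hy => exact ⟨((q⁻¹ : Kˣ) : K) • wgen K (q : K) 1, by rw [y_zz, mul_smul_comm]⟩
  | hadd a b ha hb =>
    obtain ⟨c, hc⟩ := ha
    obtain ⟨d, hd⟩ := hb
    exact ⟨c + d, by rw [add_mul, mul_add, hc, hd]⟩
  | hmul a b ha hb =>
    obtain ⟨c, hc⟩ := ha
    obtain ⟨d, hd⟩ := hb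
    exact ⟨c * d, by rw [mul_assoc, hd, ← mul_assoc, hc, mul_assoc]⟩

theorem comm_aux (a : QuantumWeyl K (q : K))
    (hx : ∃ c, a * wgen K (q : K) 0 = wgen K (q : K) 0 * a + zz q * c)
    (hy : ∃ c, a * wgen K (q : K) 1 = wgen K (q : K) 1 * a + zz q * c)
    (b : QuantumWeyl K (q : K)) : ∃ c, a * b = b * a + zz q * c := by
  induction b using qw_induction with
  | hC c => exact ⟨0, by rw [Algebra.commutes, mul_zero, add_zero]⟩
  | hx => exact hx
  | hy => exact hy
  | hadd b b' ha hb =>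
    obtain ⟨c, hc⟩ := ha
    obtain ⟨d, hd⟩ := hb
    exact ⟨c + d, by rw [mul_add (zz q), mul_add, add_mul, hc, hd]; abel⟩
  | hmul b b' ha hb =>
    obtain ⟨c, hc⟩ := ha
    obtain ⟨d, hd⟩ := hb
    obtain ⟨e, he⟩ := zz_normal q b
    refine ⟨c * b' + e * d, ?_⟩
    rw [mul_add (zz q), ← mul_assoc (zz q) e, ← he, ← mul_assoc a, hc, add_mul, mul_assoc b a, hd,
      mul_add b]
    simp only [mul_assoc]
    abel

theorem comm_mem (a b : QuantumWeyl K (q : K)) : ∃ c, a * b = b * a + zz q * c := by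
  have neg : ∀ a b : QuantumWeyl K (q : K), (∃ c, a * b = b * a + zz q * c) →
      ∃ c, b * a = a * b + zz q * c := by
    rintro a b ⟨c, hc⟩
    exact ⟨(-1 : K) • c, by rw [mul_smul_comm, hc]; module⟩
  refine comm_aux q a ?_ ?_ b
  · refine neg _ _ (comm_aux q _ ?_ ?_ a)
    · exact ⟨0, by rw [mul_zero, add_zero]⟩
    · exact ⟨1, by rw [zz_comm, mul_one]⟩
  · refine neg _ _ (comm_aux q _ ?_ ?_ a)
    · exact neg _ _ ⟨1, by rw [zz_comm, mul_one]⟩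
    · exact ⟨0, by rw [mul_zero, add_zero]⟩

/-! ### The embedding in the torus -/

/-- coefficient polynomial of `y` -/
noncomputable def dd : K[X] := C ((q : K) - 1)⁻¹ * (X - 1)

theorem qsmul_dd : qz q 1 • dd q = C ((q : K) - 1)⁻¹ * (C (q : K) * X - 1) := by
  rw [dd, smul_mul', smul_sub, qsmul_C, smul_one, qz_smul_X, zpow_one]

theorem phi_rel (hq1 : (q : K) ≠ 1) : sg q 1 1 * sg q (-1) (dd q) =
    (q : K) • (sg q (-1) (dd q) * sg q 1 1) + 1 := by
  rw [sg_mul, sg_mul, sg_smul, ← sg_one]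
  norm_num
  rw [sg_add]
  congr 1
  rw [qsmul_dd, dd, smul_eq_C_mul]
  have : (C ((q : K) - 1)⁻¹ * (C (q : K) - 1) : K[X]) = 1 := by
    rw [← C_1, ← C_sub, ← C_mul, inv_mul_cancel₀ (sub_ne_zero.2 hq1)]
  linear_combination this

/-- The map from the quantum Weyl algebra to the torus. -/
noncomputable def phi (hq1 : (q : K) ≠ 1) : QuantumWeyl K (q : K) →ₐ[K] QT q :=
  RingQuot.liftAlgHom K ⟨FreeAlgebra.lift K ![sg q 1 1, sg q (-1) (dd q)], by
    intro a b h
    cases h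
    simpa using phi_rel q hq1⟩

variable (hq1 : (q : K) ≠ 1)

theorem phi_x : phi q hq1 (wgen K (q : K) 0) = sg q 1 1 := by
  simp [phi, wgen]

theorem phi_y : phi q hq1 (wgen K (q : K) 1) = sg q (-1) (dd q) := by
  simp [phi, wgen]

theorem phi_z : phi q hq1 (zz q) = sg q 0 X := by
  rw [zz, map_add, map_smul, map_mul, phi_x, phi_y, sg_mul, map_one, ← sg_one, sg_smul]
  norm_num
  rw [sg_add]
  congr 1
  rw [dd, smul_eq_C_mul]
  have : (C ((q : K) - 1)⁻¹ * (C (q : K) - 1) : K[X]) = 1 := by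
    rw [← C_1, ← C_sub, ← C_mul, inv_mul_cancel₀ (sub_ne_zero.2 hq1)]
  rw [C_sub, C_1]
  linear_combination (X - 1) * this

theorem phi_aeval_z (f : K[X]) : phi q hq1 (aeval (zz q) f) = sg q 0 f := by
  rw [← aeval_algHom_apply, phi_z]
  induction f using Polynomial.induction_on' with
  | add f g hf hg => rw [map_add, hf, hg, sg_add]
  | monomial n a =>
    have h : ∀ n : ℕ, (sg q 0 X) ^ n = sg q 0 (X ^ n) := by
      intro n
      induction n with
      | zero => simp [sg_one]
      | succ n ih => rw [pow_succ, ih, sg_mul, qz_zero, one_smul, add_zero, pow_succ]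
    rw [aeval_monomial, h, ← Algebra.smul_def, sg_smul, smul_X_eq_monomial]

/-- coefficient of `y ^ k` -/
noncomputable def ee : ℕ → K[X]
  | 0 => 1
  | k + 1 => dd q * (qz q (-1) • ee k)

theorem phi_y_pow (k : ℕ) : phi q hq1 (wgen K (q : K) 1 ^ k) = sg q (-k) (ee q k) := by
  induction k with
  | zero => simp [ee, sg_one]
  | succ k ih =>
    rw [pow_succ', map_mul, phi_y, ih, sg_mul, ee]
    congr 1
    push_cast; ring

theorem phi_x_pow (k : ℕ) : phi q hq1 (wgen K (q : K) 0 ^ k) = sg q k 1 := by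
  induction k with
  | zero => simp [sg_one]
  | succ k ih =>
    rw [pow_succ', map_mul, phi_x, ih, sg_mul]
    simp [add_comm]

theorem dd_eval : (dd q).eval 1 = 0 := by simp [dd]

theorem dd_ne_zero (hq1 : (q : K) ≠ 1) : dd q ≠ 0 := by
  rw [dd]
  refine mul_ne_zero ?_ ?_
  · rw [Ne, C_eq_zero, inv_eq_zero, sub_eq_zero]; exact hq1
  · exact X_sub_C_ne_zero 1

theorem ee_ne_zero (hq1 : (q : K) ≠ 1) (k : ℕ) : ee q k ≠ 0 := by
  induction k with
  | zero => simp [ee]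
  | succ k ih => exact mul_ne_zero (dd_ne_zero q hq1) (qsmul_ne_zero q _ ih)

/-- normal monomials -/
noncomputable def ww : ℤ → QuantumWeyl K (q : K)
  | Int.ofNat n => wgen K (q : K) 0 ^ n
  | Int.negSucc n => wgen K (q : K) 1 ^ (n + 1)

/-- coefficients of normal monomials -/
noncomputable def cc : ℤ → K[X]
  | Int.ofNat _ => 1
  | Int.negSucc n => ee q (n + 1)

theorem cc_ne_zero (hq1 : (q : K) ≠ 1) (n : ℤ) : cc q n ≠ 0 := by
  cases n with
  | ofNat n => exact one_ne_zero
  | negSucc n => exact ee_ne_zero q hq1 _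

theorem cc_eval (n : ℤ) (hn : n < 0) : (cc q n).eval 1 = 0 := by
  cases n with
  | ofNat n => simp at hn; omega
  | negSucc n => simp [cc, ee, dd_eval]

theorem phi_ww (f : K[X]) (n : ℤ) :
    phi q hq1 (aeval (zz q) f * ww q n) = sg q n (f * cc q n) := by
  have : phi q hq1 (ww q n) = sg q n (cc q n) := by
    cases n with
    | ofNat n => exact phi_x_pow q hq1 n
    | negSucc n => exact phi_y_pow q hq1 (n + 1)
  rw [map_mul, phi_aeval_z, this, sg_mul, qz_zero, one_smul, zero_add]

theorem mul_aeval {u : QuantumWeyl K (q : K)} {n : ℤ}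
    (h : u * zz q = ((q ^ n : Kˣ) : K) • (zz q * u)) (f : K[X]) :
    u * aeval (zz q) f = aeval (zz q) (qz q n • f) * u := by
  induction f using Polynomial.induction_on with
  | C a => rw [qsmul_C, aeval_C]; exact (Algebra.commutes _ _).symm
  | add f g hf hg => rw [map_add, mul_add, hf, hg, smul_add, map_add, add_mul]
  | monomial k a ih =>
    have e : qz q n • (C a * X ^ (k + 1) : K[X]) =
        (qz q n • (C a * X ^ k : K[X])) * (C ((q ^ n : Kˣ) : K) * X) := by
      rw [pow_succ, ← mul_assoc, smul_mul', qz_smul_X]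
    rw [e, pow_succ, ← mul_assoc, map_mul, aeval_X, ← mul_assoc, ih, mul_assoc, h, map_mul, map_mul,
      aeval_X, aeval_C, ← Algebra.smul_def]
    simp [mul_assoc]

theorem yx_eq (hq1 : (q : K) ≠ 1) : wgen K (q : K) 1 * wgen K (q : K) 0 = aeval (zz q) (dd q) := by
  have : ((q : K) - 1) ≠ 0 := sub_ne_zero.2 hq1
  rw [dd, map_mul, aeval_C, map_sub, aeval_X, map_one, ← Algebra.smul_def, zz, add_sub_cancel_left,
    smul_smul, inv_mul_cancel₀ this, one_smul]

theorem xy_eq (hq1 : (q : K) ≠ 1) :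
    wgen K (q : K) 0 * wgen K (q : K) 1 = aeval (zz q) (qz q 1 • dd q) := by
  have h : qz q 1 • dd q = C (q : K) * dd q + 1 := by
    rw [qsmul_dd, dd]
    have : (C ((q : K) - 1)⁻¹ * (C (q : K) - 1) : K[X]) = 1 := by
      rw [← C_1, ← C_sub, ← C_mul, inv_mul_cancel₀ (sub_ne_zero.2 hq1)]
    linear_combination this
  rw [wgen_rel, yx_eq q hq1, h, map_add, map_mul, aeval_C, ← Algebra.smul_def, map_one]

/-- The normal form map. -/
noncomputable def nf : (ℤ →₀ K[X]) →ₗ[K] QuantumWeyl K (q : K) :=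
  Finsupp.lsum K (fun n => (LinearMap.mulRight K (ww q n)).comp (aeval (zz q)).toLinearMap)

theorem nf_single (n : ℤ) (f : K[X]) : nf q (Finsupp.single n f) = aeval (zz q) f * ww q n := by
  simp [nf]

theorem x_ww (hq1 : (q : K) ≠ 1) (n : ℤ) :
    ∃ f : K[X], wgen K (q : K) 0 * ww q n = aeval (zz q) f * ww q (n + 1) := by
  cases n with
  | ofNat n => exact ⟨1, by rw [map_one, one_mul]; exact (pow_succ' _ _).symm⟩
  | negSucc n =>
    refine ⟨qz q 1 • dd q, ?_⟩
    rw [← xy_eq q hq1, mul_assoc]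
    cases n with
    | zero => simp [ww]
    | succ n =>
      rw [show (Int.negSucc (n + 1) + 1) = Int.negSucc n from rfl]
      simp only [ww]
      rw [pow_succ' _ (n + 1)]

theorem y_ww (hq1 : (q : K) ≠ 1) (n : ℤ) :
    ∃ f : K[X], wgen K (q : K) 1 * ww q n = aeval (zz q) f * ww q (n - 1) := by
  cases n with
  | negSucc n =>
    exact ⟨1, by rw [map_one, one_mul]; exact (pow_succ' _ _).symm⟩
  | ofNat n =>
    cases n with
    | zero =>
      refine ⟨1, ?_⟩
      rw [map_one, one_mul]
      change wgen K (q : K) 1 * wgen K (q : K) 0 ^ 0 = wgen K (q : K) 1 ^ (0 + 1)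
      rw [pow_zero, mul_one, zero_add, pow_one]
    | succ n =>
      refine ⟨dd q, ?_⟩
      rw [← yx_eq q hq1, show (Int.ofNat (n + 1) - 1) = Int.ofNat n by simp]
      simp only [ww]
      rw [pow_succ', mul_assoc]

theorem nf_surj (hq1 : (q : K) ≠ 1) : Function.Surjective (nf q) := by
  have gen : ∀ (u : QuantumWeyl K (q : K)) (k : ℤ) (_ : u * zz q = ((q ^ k : Kˣ) : K) • (zz q * u))
      (_ : ∀ n, ∃ f : K[X], u * ww q n = aeval (zz q) f * ww q (n + k)),
      ∀ m ∈ LinearMap.range (nf q), u * m ∈ LinearMap.range (nf q) := by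
    rintro u k hu hw m ⟨F, rfl⟩
    induction F using Finsupp.induction_linear with
    | zero => simp
    | add F G hF hG => rw [map_add, mul_add]; exact add_mem hF hG
    | single n f =>
      obtain ⟨g, hg⟩ := hw n
      refine ⟨Finsupp.single (n + k) ((qz q k • f) * g), ?_⟩
      rw [nf_single, nf_single, ← mul_assoc, mul_aeval q hu, mul_assoc, hg, map_mul, mul_assoc]
  have key : ∀ a : QuantumWeyl K (q : K),
      ∀ m ∈ LinearMap.range (nf q), a * m ∈ LinearMap.range (nf q) := by
    intro a
    induction a using qw_induction with
    | hC c => intro m hm; rw [← Algebra.smul_def]; exact Submodule.smul_mem _ _ hm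
    | hx => exact gen _ 1 (by rw [x_zz]; simp) (fun n => x_ww q hq1 n)
    | hy => exact gen _ (-1) (by rw [y_zz]; simp) (fun n => y_ww q hq1 n)
    | hadd a b ha hb => intro m hm; rw [add_mul]; exact add_mem (ha m hm) (hb m hm)
    | hmul a b ha hb => intro m hm; rw [mul_assoc]; exact ha _ (hb m hm)
  intro a
  have h1 : (1 : QuantumWeyl K (q : K)) ∈ LinearMap.range (nf q) :=
    ⟨Finsupp.single 0 1, by rw [nf_single, map_one, one_mul]; exact pow_zero _⟩
  have := key a 1 h1
  rwa [mul_one] at this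

theorem phi_nf_coeff (F : ℤ →₀ K[X]) (n : ℤ) :
    (phi q hq1 (nf q F)).coeff (qz q n) = F n * cc q n := by
  induction F using Finsupp.induction_linear with
  | zero => simp
  | add F G hF hG => simp [hF, hG, add_mul]
  | single m f =>
    rw [nf_single, phi_ww, sg, SkewMonoidAlgebra.coeff_single]
    by_cases h : n = m
    · subst h; simp
    · rw [Finsupp.single_eq_of_ne (a := qz q m) (a' := qz q n) (fun h' => h h'), Finsupp.single_eq_of_ne h, zero_mul]

theorem phi_inj : Function.Injective (phi q hq1) := by
  rw [injective_iff_map_eq_zero]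
  intro a ha
  obtain ⟨F, rfl⟩ := nf_surj q hq1 a
  have : F = 0 := by
    ext1 n
    have := phi_nf_coeff q hq1 F n
    rw [ha] at this
    simpa [cc_ne_zero q hq1 n] using this
  rw [this, map_zero]

theorem phi_coeff_eval (a) (n : ℤ) (hn : n < 0) :
    ((phi q hq1 a).coeff (qz q n)).eval 1 = 0 := by
  obtain ⟨F, rfl⟩ := nf_surj q hq1 a
  rw [phi_nf_coeff, eval_mul, cc_eval q n hn, mul_zero]

theorem zz_cancel (hq1 : (q : K) ≠ 1) {a b : QuantumWeyl K (q : K)} (h : zz q * a = zz q * b) : a = b := by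
  apply phi_inj q hq1
  ext1 n
  have h1 := congrArg (fun u => (phi q hq1 u).coeff n) h
  simp only [map_mul, phi_z, sg, qz_zero, SkewMonoidAlgebra.coeff_single_one_mul] at h1
  exact mul_left_cancel₀ X_ne_zero h1

theorem unit_scalar (hq1 : (q : K) ≠ 1) {a b : QuantumWeyl K (q : K)} (h : a * b = 1) :
    ∃ c : K, c ≠ 0 ∧ a = algebraMap K _ c := by
  have h1 := congrArg (phi q hq1) h
  rw [map_mul, map_one] at h1
  obtain ⟨n, f, g, ha, hb, hf, hg⟩ := torus_unit q h1
  have nu : ∀ f : K[X], IsUnit f → f.eval 1 ≠ 0 := by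
    intro f hf
    exact (hf.map (evalRingHom (1 : K))).ne_zero
  have hn : n = 0 := by
    rcases lt_trichotomy n 0 with hn | hn | hn
    · have := phi_coeff_eval q hq1 a n hn
      rw [ha, sg_coeff_self] at this
      exact absurd this (nu f hf)
    · exact hn
    · have := phi_coeff_eval q hq1 b (-n) (by omega)
      rw [hb, sg_coeff_self] at this
      exact absurd this (nu g hg)
  subst hn
  obtain ⟨c, hc, rfl⟩ := Polynomial.isUnit_iff.1 hf
  refine ⟨c, hc.ne_zero, phi_inj q hq1 ?_⟩
  rw [ha, AlgHom.commutes, Algebra.algebraMap_eq_smul_one, ← sg_one, sg_smul, smul_eq_C_mul, mul_one]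

theorem skew_coeff {u : QT q} {r : K} (h : u * sg q 0 X = r • (sg q 0 X * u)) (m : ℤ)
    (hm : u.coeff (qz q m) ≠ 0) : ((q ^ m : Kˣ) : K) = r := by
  have h1 := congrArg (fun v => v.coeff (qz q m)) h
  simp only [sg, qz_zero, SkewMonoidAlgebra.coeff_mul_single_one, SkewMonoidAlgebra.coeff_smul,
    Finsupp.smul_apply, SkewMonoidAlgebra.coeff_single_one_mul, qz_smul_X, smul_eq_C_mul] at h1
  have h2 : (X * u.coeff (qz q m)) * (C ((q ^ m : Kˣ) : K)) = (X * u.coeff (qz q m)) * C r := by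
    linear_combination h1
  exact C_injective (mul_left_cancel₀ (mul_ne_zero X_ne_zero hm) h2)

theorem zpow_inj_of {q : Kˣ} (hq : ∀ n : ℕ, 0 < n → q ^ n ≠ 1) {m n : ℤ} (h : q ^ m = q ^ n) :
    m = n := by
  refine injective_zpow_iff_not_isOfFinOrder.2 ?_ h
  rw [isOfFinOrder_iff_pow_eq_one]
  rintro ⟨n, hn, h⟩
  exact hq n hn h

theorem iso_zz {p q : Kˣ} (hq1 : (q : K) ≠ 1)
    (θ : QuantumWeyl K (p : K) ≃ₐ[K] QuantumWeyl K (q : K)) :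
    ∃ c : K, c ≠ 0 ∧ θ (zz p) = c • zz q := by
  -- the image of the commutator is a commutator
  have cancel : ∀ (r : Kˣ) (a b c : QuantumWeyl K (r : K)), a + b = a + c → b = c := by
    intro r a b c h
    exact add_left_cancel h
  have h1 : ∃ a, θ (zz p) = zz q * a := by
    obtain ⟨a, ha⟩ := comm_mem q (θ (wgen K (p : K) 0)) (θ (wgen K (p : K) 1))
    refine ⟨a, cancel q _ _ _ (Eq.trans ?_ ha)⟩
    rw [← map_mul, ← map_mul, ← map_add, zz_comm]
  have h2 : ∃ b, θ.symm (zz q) = zz p * b := by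
    obtain ⟨a, ha⟩ := comm_mem p (θ.symm (wgen K (q : K) 0)) (θ.symm (wgen K (q : K) 1))
    refine ⟨a, cancel p _ _ _ (Eq.trans ?_ ha)⟩
    rw [← map_mul, ← map_mul, ← map_add, zz_comm]
  obtain ⟨a, ha⟩ := h1
  obtain ⟨b, hb⟩ := h2
  have h3 : zz q * (a * θ b) = zz q * 1 := by
    rw [← mul_assoc, ← ha, ← map_mul, ← hb, AlgEquiv.apply_symm_apply, mul_one]
  obtain ⟨c, hc, rfl⟩ := unit_scalar q hq1 (zz_cancel q hq1 h3)
  exact ⟨c, hc, by rw [ha, ← Algebra.commutes, ← Algebra.smul_def]⟩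

theorem iso_struct {p q : Kˣ} (hp1 : (p : K) ≠ 1) (hq1 : (q : K) ≠ 1)
    (hq : ∀ n : ℕ, 0 < n → q ^ n ≠ 1)
    (θ : QuantumWeyl K (p : K) ≃ₐ[K] QuantumWeyl K (q : K)) :
    ∃ n : ℤ, p = q ^ n ∧ ∃ (f g : K[X]) (c : K), c ≠ 0 ∧
      phi q hq1 (θ (wgen K (p : K) 0)) = sg q n f ∧
      phi q hq1 (θ (wgen K (p : K) 1)) = sg q (-n) g ∧
      C c * X = 1 + C ((p : K) - 1) * (g * (qz q (-n) • f)) := by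
  obtain ⟨c, hc, hz⟩ := iso_zz hq1 θ
  have scale : ∀ (u v : QT q) (r : K), u * (c • v) = r • ((c • v) * u) → u * v = r • (v * u) := by
    intro u v r h
    rw [mul_smul_comm, smul_mul_assoc, smul_comm] at h
    exact smul_right_injective _ hc h
  have eX : phi q hq1 (θ (wgen K (p : K) 0)) * sg q 0 X =
      (p : K) • (sg q 0 X * phi q hq1 (θ (wgen K (p : K) 0))) := by
    apply scale
    have := congrArg (fun a => phi q hq1 (θ a)) (x_zz p)
    simpa only [map_mul, map_smul, hz, phi_z] using this
  have eY : phi q hq1 (θ (wgen K (p : K) 1)) * sg q 0 X =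
      ((p⁻¹ : Kˣ) : K) • (sg q 0 X * phi q hq1 (θ (wgen K (p : K) 1))) := by
    apply scale
    have := congrArg (fun a => phi q hq1 (θ a)) (y_zz p)
    simpa only [map_mul, map_smul, hz, phi_z] using this
  have hX0 : phi q hq1 (θ (wgen K (p : K) 0)) ≠ 0 := by
    intro h
    have h0 : wgen K (p : K) 0 = 0 := by
      apply θ.injective
      apply phi_inj q hq1
      rw [h, map_zero, map_zero]
    have h1 := phi_x p hp1
    rw [h0, map_zero] at h1
    have h2 := congrArg (fun v => v.coeff (qz p 1)) h1
    simp only [sg_coeff_self] at h2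
    simp at h2
  obtain ⟨n, hn⟩ : ∃ n : ℤ, (phi q hq1 (θ (wgen K (p : K) 0))).coeff (qz q n) ≠ 0 := by
    by_contra hcon
    push Not at hcon
    exact hX0 (SkewMonoidAlgebra.ext fun a => hcon (qzInt a))
  have hpn : q ^ n = p := Units.ext (skew_coeff q eX n hn)
  have hf := eq_sg q (phi q hq1 (θ (wgen K (p : K) 0))) n (by
    intro m hm
    by_contra h0
    have : q ^ m = p := Units.ext (skew_coeff q eX m h0)
    exact hm (zpow_inj_of hq (this.trans hpn.symm)))
  have hg := eq_sg q (phi q hq1 (θ (wgen K (p : K) 1))) (-n) (by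
    intro m hm
    by_contra h0
    have : q ^ m = p⁻¹ := Units.ext (skew_coeff q eY m h0)
    refine hm (zpow_inj_of hq (this.trans ?_))
    rw [zpow_neg, hpn])
  refine ⟨n, hpn.symm, _, _, c, hc, hf, hg, ?_⟩
  have hz2 := congrArg (phi q hq1) hz
  rw [map_smul, phi_z, zz, map_add, map_smul, map_mul, map_add, map_smul, map_mul, map_one, map_one,
    hf, hg, sg_mul, neg_add_cancel, sg_smul, sg_smul, ← sg_one, sg_add] at hz2
  have := sg_inj q 0 hz2
  rw [smul_eq_C_mul, smul_eq_C_mul] at this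
  exact this.symm

/-- Degree analysis: if `u` vanishes at `1` and `u * v` has degree one. -/
theorem deg_aux {u v : K[X]} {c r : K} (hc : c ≠ 0) (hu : u.eval 1 = 0)
    (h : ∃ w : K[X], w.natDegree = u.natDegree + v.natDegree ∧ C c * X = 1 + C r * w)
    (hu0 : u ≠ 0) : ∃ a b : K, u = C a * (X - 1) ∧ v = C b := by
  obtain ⟨w, hw, e⟩ := h
  obtain ⟨t, rfl⟩ := dvd_iff_isRoot.2 hu
  have ht : t ≠ 0 := right_ne_zero_of_mul hu0
  have hr : r ≠ 0 := by
    rintro rfl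
    have := congrArg (eval 0) e
    simp at this
  have hd : w.natDegree = 1 := by
    have h1 : C r * w = C c * X - C 1 := by rw [e, C_1]; ring
    have h2 := congrArg natDegree h1
    rwa [natDegree_C_mul hr, natDegree_sub_C, natDegree_C_mul_X _ hc] at h2
  rw [natDegree_mul (X_sub_C_ne_zero 1) ht, natDegree_X_sub_C, hd] at hw
  have t0 : t.natDegree = 0 := by omega
  have v0 : v.natDegree = 0 := by omega
  refine ⟨t.coeff 0, v.coeff 0, ?_, eq_C_of_natDegree_eq_zero v0⟩
  rw [← eq_C_of_natDegree_eq_zero t0, C_1, mul_comm]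

theorem phi_of_lin_x (a : QuantumWeyl K (q : K)) (b : K) (h : phi q hq1 a = sg q 1 (C b)) :
    a = b • wgen K (q : K) 0 := by
  apply phi_inj q hq1
  rw [h, map_smul, phi_x, sg_smul, smul_eq_C_mul, mul_one]

theorem phi_of_lin_y (a : QuantumWeyl K (q : K)) (b : K)
    (h : phi q hq1 a = sg q (-1) (C b * (X - 1))) :
    a = (b * ((q : K) - 1)) • wgen K (q : K) 1 := by
  apply phi_inj q hq1
  rw [h, map_smul, phi_y, sg_smul, smul_eq_C_mul, dd, ← mul_assoc, ← C_mul, mul_assoc b,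
    mul_inv_cancel₀ (sub_ne_zero.2 hq1), mul_one]

end QW

/-- for `p, q` non-roots of unity and `θ : A_1^p(K) → A_1^q(K)`
an isomorphism, `θ(X)` and `θ(Y)` lie in the span of `{1, x, y}`. -/
theorem quantumWeyl_image_degree_one (K : Type*) [Field K] [CharZero K] (p q : Kˣ)
    (hp : ∀ n : ℕ, 0 < n → p ^ n ≠ 1) (hq : ∀ n : ℕ, 0 < n → q ^ n ≠ 1)
    (θ : QuantumWeyl K (p : K) ≃ₐ[K] QuantumWeyl K (q : K)) :
    ∃ α β γ α' β' γ' : K,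
      θ (wgen K (p : K) 0) =
        α • wgen K (q : K) 0 + β • wgen K (q : K) 1 + algebraMap K (QuantumWeyl K (q : K)) γ ∧
      θ (wgen K (p : K) 1) =
        α' • wgen K (q : K) 0 + β' • wgen K (q : K) 1 + algebraMap K (QuantumWeyl K (q : K)) γ' := by
  have hp1 : (p : K) ≠ 1 := fun h => hp 1 one_pos (by rw [pow_one]; exact Units.ext h)
  have hq1 : (q : K) ≠ 1 := fun h => hq 1 one_pos (by rw [pow_one]; exact Units.ext h)
  obtain ⟨n, hn, f, g, c, hc, hf, hg, e⟩ := iso_struct hp1 hq1 hq θ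
  obtain ⟨m, hm, -⟩ := iso_struct hq1 hp1 hp θ.symm
  have hnm : n * m = 1 := by
    apply zpow_inj_of hq
    rw [zpow_mul, ← hn, ← hm, zpow_one]
  have hprod : g * (qz q (-n) • f) ≠ 0 := by
    intro h0
    rw [h0] at e
    have := congrArg (Polynomial.eval 0) e
    simp at this
  have hg0 : g ≠ 0 := left_ne_zero_of_mul hprod
  have hf0' : qz q (-n) • f ≠ 0 := right_ne_zero_of_mul hprod
  have hf0 : f ≠ 0 := by rintro rfl; exact hf0' (smul_zero _)
  have hdeg : (g * (qz q (-n) • f)).natDegree = g.natDegree + f.natDegree := by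
    rw [Polynomial.natDegree_mul hg0 hf0', natDegree_qsmul]
  rcases Int.eq_one_or_neg_one_of_mul_eq_one hnm with rfl | rfl
  · have hv := phi_coeff_eval q hq1 (θ (wgen K (p : K) 1)) (-1) (by norm_num)
    rw [hg, sg_coeff_self] at hv
    obtain ⟨a, b, rfl, rfl⟩ := deg_aux hc hv ⟨_, hdeg, e⟩ hg0
    refine ⟨b, 0, 0, 0, a * ((q : K) - 1), 0, ?_, ?_⟩
    · rw [phi_of_lin_x q hq1 _ _ hf, zero_smul, map_zero, add_zero, add_zero]
    · rw [phi_of_lin_y q hq1 _ _ hg, zero_smul, map_zero, add_zero, zero_add]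
  · have hv := phi_coeff_eval q hq1 (θ (wgen K (p : K) 0)) (-1) (by norm_num)
    rw [hf, sg_coeff_self] at hv
    obtain ⟨a, b, rfl, rfl⟩ := deg_aux hc hv ⟨_, hdeg.trans (add_comm _ _), e⟩ hf0
    rw [neg_neg] at hg
    refine ⟨0, a * ((q : K) - 1), 0, b, 0, 0, ?_, ?_⟩
    · rw [phi_of_lin_y q hq1 _ _ hf, zero_smul, map_zero, add_zero, zero_add]
    · rw [phi_of_lin_x q hq1 _ _ hg, zero_smul, map_zero, add_zero, add_zero]
end

section
/- Let K be a field, n ≥ 1, and let p and q be multiplicatively antisymmetric n×n matrices over Kˣ. The quantum affine spaces O_p(K^n) and O_q(K^n) are isomorphic as K-algebras if and only if there exists a permutation σ of {1,…,n} such that p_{ij} = q_{σ(i)σ(j)} for all 1 ≤ i, j ≤ n. -/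
/-- The defining relations of quantum affine `n`-space `O_p(K^n)` for a matrix
of units `p`: `x_i x_j = p_{ij}·x_j x_i` for all `i, j`. -/
inductive QAffRel (K : Type*) [Field K] (n : ℕ) (p : Fin n → Fin n → Kˣ) :
    FreeAlgebra K (Fin n) → FreeAlgebra K (Fin n) → Prop
  | rel (i j : Fin n) :
      QAffRel K n p (FreeAlgebra.ι K i * FreeAlgebra.ι K j)
        ((p i j : K) • (FreeAlgebra.ι K j * FreeAlgebra.ι K i))

/-- Quantum affine `n`-space `O_p(K^n)`. -/
abbrev QAff (K : Type*) [Field K] (n : ℕ) (p : Fin n → Fin n → Kˣ) := RingQuot (QAffRel K n p)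

/-- The images of the free generators in `O_p(K^n)`. -/
noncomputable def qaffGen (K : Type*) [Field K] (n : ℕ) (p : Fin n → Fin n → Kˣ) (i : Fin n) :
    QAff K n p :=
  RingQuot.mkAlgHom K (QAffRel K n p) (FreeAlgebra.ι K i)

/-- universal property -/
noncomputable def qlift {K : Type*} [Field K] {n : ℕ} {p : Fin n → Fin n → Kˣ} {B : Type*} [Ring B]
    [Algebra K B] (g : Fin n → B) (h : ∀ i j, g i * g j = (p i j : K) • (g j * g i)) :
    QAff K n p →ₐ[K] B :=
  RingQuot.liftAlgHom K ⟨FreeAlgebra.lift K g, by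
    rintro _ _ ⟨i, j⟩
    simp [h i j]⟩

theorem qlift_gen {K : Type*} [Field K] {n : ℕ} {p : Fin n → Fin n → Kˣ} {B : Type*} [Ring B]
    [Algebra K B] (g : Fin n → B) (h : ∀ i j, g i * g j = (p i j : K) • (g j * g i)) (i : Fin n) :
    qlift g h (qaffGen K n p i) = g i := by
  simp [qlift, qaffGen]

theorem qgen_rel {K : Type*} [Field K] {n : ℕ} (p : Fin n → Fin n → Kˣ) (i j : Fin n) :
    qaffGen K n p i * qaffGen K n p j = (p i j : K) • (qaffGen K n p j * qaffGen K n p i) := by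
  have := RingQuot.mkAlgHom_rel K (QAffRel.rel (K := K) (n := n) (p := p) i j)
  simpa [qaffGen] using this

theorem qaff_hom_ext {K : Type*} [Field K] {n : ℕ} {p : Fin n → Fin n → Kˣ} {B : Type*} [Ring B]
    [Algebra K B] (f g : QAff K n p →ₐ[K] B)
    (h : ∀ i, f (qaffGen K n p i) = g (qaffGen K n p i)) : f = g := by
  apply RingQuot.ringQuot_ext'
  apply FreeAlgebra.hom_ext
  funext i
  exact h i

theorem qaff_induct {K : Type*} [Field K] {n : ℕ} {p : Fin n → Fin n → Kˣ}
    (S : Subalgebra K (QAff K n p)) (h : ∀ i, qaffGen K n p i ∈ S) (f : QAff K n p) : f ∈ S := by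
  have key : S.val.comp (qlift (p := p) (fun i => (⟨qaffGen K n p i, h i⟩ : S)) (by
      intro i j
      apply Subtype.ext
      simpa using qgen_rel p i j)) = AlgHom.id K _ := by
    apply qaff_hom_ext
    intro i
    simp [qlift_gen]
  have := DFunLike.congr_fun key f
  simp only [AlgHom.comp_apply, AlgHom.id_apply] at this
  rw [← this]
  exact Subtype.property _

/-- linear truncation -/
noncomputable def qtriv {K : Type*} [Field K] {n : ℕ} (q : Fin n → Fin n → Kˣ) :
    QAff K n q →ₐ[K] TrivSqZeroExt K (Fin n → K) :=
  qlift (fun i => TrivSqZeroExt.inr (Pi.single i 1)) (by intro i j; simp)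

/-- the three dimensional representations -/
noncomputable def qrho {K : Type*} [Field K] {n : ℕ} (q : Fin n → Fin n → Kˣ) (α β : Fin n → K)
    (h : ∀ i j, α i * β j = q i j * (α j * β i)) :
    QAff K n q →ₐ[K] Matrix (Fin 3) (Fin 3) K :=
  qlift (fun i => !![0, α i, 0; 0, 0, β i; 0, 0, 0]) (by
    intro i j
    ext a b
    fin_cases a <;> fin_cases b <;> simp [Matrix.mul_apply, Fin.sum_univ_three, h i j])

theorem qrho_shape {K : Type*} [Field K] {n : ℕ} (q : Fin n → Fin n → Kˣ) (α β : Fin n → K)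
    (h : ∀ i j, α i * β j = q i j * (α j * β i)) (f : QAff K n q) :
    ∃ t, qrho q α β h f = !![(qtriv q f).fst, α ⬝ᵥ (qtriv q f).snd, t;
      0, (qtriv q f).fst, β ⬝ᵥ (qtriv q f).snd; 0, 0, (qtriv q f).fst] := by
  let S : Subalgebra K (QAff K n q) :=
    { carrier := {f | ∃ t, qrho q α β h f = !![(qtriv q f).fst, α ⬝ᵥ (qtriv q f).snd, t;
        0, (qtriv q f).fst, β ⬝ᵥ (qtriv q f).snd; 0, 0, (qtriv q f).fst]}
      mul_mem' := by
        rintro f g ⟨t, ht⟩ ⟨s, hs⟩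
        refine ⟨qrho q α β h (f * g) 0 2, ?_⟩
        rw [map_mul, map_mul, ht, hs]
        ext a b
        fin_cases a <;> fin_cases b <;>
          simp [Matrix.mul_apply, Fin.sum_univ_three, dotProduct_add, dotProduct_smul] <;> ring
      add_mem' := by
        rintro f g ⟨t, ht⟩ ⟨s, hs⟩
        refine ⟨t + s, ?_⟩
        rw [map_add, map_add, ht, hs]
        ext a b
        fin_cases a <;> fin_cases b <;> simp [dotProduct_add]
      algebraMap_mem' := by
        intro r
        refine ⟨0, ?_⟩
        rw [AlgHom.commutes, AlgHom.commutes]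
        ext a b
        fin_cases a <;> fin_cases b <;>
          simp [Matrix.algebraMap_matrix_apply, TrivSqZeroExt.algebraMap_eq_inl] }
  refine qaff_induct S (fun i => ⟨0, ?_⟩) f
  simp [qrho, qtriv, qlift_gen]

theorem qaff_lin_span {K : Type*} [Field K] {n : ℕ} {p q : Fin n → Fin n → Kˣ}
    (φ : QAff K n p →ₐ[K] QAff K n q) (f : QAff K n p) :
    (qtriv q (φ f)).snd ∈
      Submodule.span K (Set.range fun i => (qtriv q (φ (qaffGen K n p i))).snd) := by
  let S : Subalgebra K (QAff K n p) :=
    { carrier := {f | (qtriv q (φ f)).snd ∈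
        Submodule.span K (Set.range fun i => (qtriv q (φ (qaffGen K n p i))).snd)}
      mul_mem' := by
        intro f g hf hg
        simp only [Set.mem_ofPred_eq, map_mul, TrivSqZeroExt.snd_mul] at *
        refine Submodule.add_mem _ (Submodule.smul_mem _ _ hg) ?_
        rw [op_smul_eq_smul]
        exact Submodule.smul_mem _ _ hf
      add_mem' := by
        intro f g hf hg
        simp only [Set.mem_ofPred_eq, map_add, TrivSqZeroExt.snd_add] at *
        exact Submodule.add_mem _ hf hg
      algebraMap_mem' := by
        intro r
        simp [TrivSqZeroExt.algebraMap_eq_inl] }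
  exact qaff_induct S (fun i => Submodule.subset_span ⟨i, rfl⟩) f

/-- The linear algebra part. -/
theorem qaff_perm {K : Type*} [Field K] {n : ℕ} (p q : Fin n → Fin n → Kˣ)
    (hq2 : ∀ i j, q i j * q j i = 1)
    (A : Matrix (Fin n) (Fin n) K) (hA : A.det ≠ 0)
    (hd : ∀ i j k, p i j ≠ 1 → A i k * A j k = 0)
    (hm : ∀ i j k m, k ≠ m → A i k * A j m + q m k * (A i m * A j k) =
      p i j * (A j k * A i m + q m k * (A j m * A i k))) 
    (hq1 : ∀ i, q i i = 1) (hp1 : ∀ i, p i i = 1) :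
    ∃ σ : Equiv.Perm (Fin n), ∀ i j, p i j = q (σ i) (σ j) := by
  have key : ∀ i k m, A i k ≠ 0 → A i m ≠ 0 → q m k = 1 := by
    intro i k m hk hm'
    by_contra hne
    have hkm : k ≠ m := by rintro rfl; exact hne (hq1 k)
    have hprop : ∀ j, A i k * A j m = A i m * A j k := by
      intro j
      by_cases hpij : p i j = 1
      · have := hm i j k m hkm
        rw [hpij] at this
        have h1 : (1 - (q m k : K)) ≠ 0 := by
          intro h0
          exact hne (Units.ext (by simpa using (sub_eq_zero.1 h0).symm))
        apply mul_left_cancel₀ h1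
        push_cast at this
        linear_combination this
      · have h1 := hd i j k hpij
        have h2 := hd i j m hpij
        rw [(mul_eq_zero.1 h1).resolve_left hk, (mul_eq_zero.1 h2).resolve_left hm']
        simp
    apply hA
    have : A.mulVec (Pi.single m (A i k) - Pi.single k (A i m)) = 0 := by
      ext j
      simp [Matrix.mulVec_sub]
      linear_combination hprop j
    refine Matrix.exists_mulVec_eq_zero_iff.1 ⟨_, ?_, this⟩
    intro h0
    have := congrFun h0 m
    simp [hkm.symm] at this
    exact hk this
  obtain ⟨σ, hσ⟩ : ∃ σ : Equiv.Perm (Fin n), ∀ i, A i (σ i) ≠ 0 := by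
    by_contra! hcon
    apply hA
    rw [← Matrix.det_transpose, Matrix.det_apply]
    apply Finset.sum_eq_zero
    intro σ _
    obtain ⟨i, hi⟩ := hcon σ
    rw [Finset.prod_eq_zero (Finset.mem_univ i) (by simpa using hi), smul_zero]
  refine ⟨σ, fun i j => ?_⟩
  by_cases hij : i = j
  · subst hij; rw [hp1, hq1]
  have hne : σ i ≠ σ j := fun h => hij (σ.injective h)
  have h := hm i j (σ i) (σ j) hne
  have hi := hσ i
  have hj := hσ j
  have hqq := hq2 (σ i) (σ j)
  by_cases hpij : p i j = 1
  · rw [hpij] at h ⊢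
    by_cases hz : A i (σ j) = 0
    · rw [hz] at h
      have h1 : (1 - (q (σ j) (σ i) : K)) * (A i (σ i) * A j (σ j)) = 0 := by
        push_cast at h
        linear_combination h
      have h2 := (mul_eq_zero.1 h1).resolve_right (mul_ne_zero hi hj)
      have h3 : q (σ j) (σ i) = 1 := Units.ext (by simpa using (sub_eq_zero.1 h2).symm)
      rw [h3, mul_one] at hqq
      exact hqq.symm
    · rw [key i _ _ hi hz, mul_one] at hqq
      exact hqq.symm
  · have h1 := (mul_eq_zero.1 (hd i j (σ i) hpij)).resolve_left hi
    rw [h1] at h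
    have h2 : (1 - (p i j : K) * q (σ j) (σ i)) * (A i (σ i) * A j (σ j)) = 0 := by
      linear_combination h
    have h3 := (mul_eq_zero.1 h2).resolve_right (mul_ne_zero hi hj)
    have h4 : p i j * q (σ j) (σ i) = 1 :=
      Units.ext (by simpa using (sub_eq_zero.1 h3).symm)
    exact mul_right_cancel (h4.trans hqq.symm)

theorem qaff_forward {K : Type*} [Field K] {n : ℕ} (p q : Fin n → Fin n → Kˣ)
    (hp1 : ∀ i, p i i = 1) (hq1 : ∀ i, q i i = 1) (hq2 : ∀ i j, q i j * q j i = 1)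
    (φ : QAff K n p ≃ₐ[K] QAff K n q) :
    ∃ σ : Equiv.Perm (Fin n), ∀ i j, p i j = q (σ i) (σ j) := by
  set y : Fin n → QAff K n q := fun i => φ (qaffGen K n p i) with hy
  have hyr : ∀ i j, y i * y j = (p i j : K) • (y j * y i) := by
    intro i j
    simp only [hy]
    rw [← map_mul, ← map_mul, ← map_smul, qgen_rel]
  set A : Matrix (Fin n) (Fin n) K := fun i => (qtriv q (y i)).snd with hAdef
  set a : Fin n → K := fun i => (qtriv q (y i)).fst with ha
  have hspan : ⊤ ≤ Submodule.span K (Set.range A) := by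
    rw [← (Pi.basisFun K (Fin n)).span_eq, Submodule.span_le]
    rintro _ ⟨k, rfl⟩
    have := qaff_lin_span φ.toAlgHom (φ.symm (qaffGen K n q k))
    have hk : qtriv q (φ.toAlgHom (φ.symm (qaffGen K n q k))) =
        TrivSqZeroExt.inr (Pi.single k 1) := by
      simp [qtriv, qlift_gen]
    rw [hk, TrivSqZeroExt.snd_inr] at this
    rw [Pi.basisFun_apply]
    exact this
  have hli : LinearIndependent K A :=
    linearIndependent_of_top_le_span_of_card_eq_finrank hspan (by simp)
  have hA : A.det ≠ 0 := by
    have := Matrix.linearIndependent_rows_iff_isUnit.1 hli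
    exact ((Matrix.isUnit_iff_isUnit_det _).1 this).ne_zero
  have ha0 : ∀ i j, p i j ≠ 1 → a i = 0 ∧ a j = 0 := by
    intro i j hij
    have hne : i ≠ j := by rintro rfl; exact hij (hp1 i)
    have h1 : (1 - (p i j : K)) ≠ 0 := by
      intro h0
      exact hij (Units.ext (by simpa using (sub_eq_zero.1 h0).symm))
    have h := congrArg (fun z => (qtriv q z).snd) (hyr i j)
    simp only [map_mul, map_smul, TrivSqZeroExt.snd_mul, TrivSqZeroExt.snd_smul,
      op_smul_eq_smul] at h
    have h2 : a j • A i + a i • A j = 0 := by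
      funext k
      have hk := congrFun h k
      apply mul_left_cancel₀ h1
      simp only [Pi.add_apply, Pi.smul_apply, smul_eq_mul, Pi.zero_apply, hAdef, ha] at hk ⊢
      linear_combination hk
    have hinj : Function.Injective ![i, j] := by
      intro u v huv
      fin_cases u <;> fin_cases v <;> simp_all [hne.symm]
    have hpair : LinearIndependent K ![A i, A j] := by
      have h3 := LinearIndependent.comp hli ![i, j] hinj
      convert h3 using 1
      funext u
      fin_cases u <;> rfl
    have := (LinearIndependent.pair_iff.1 hpair) _ _ h2
    exact ⟨this.2, this.1⟩
  have main : ∀ (α β : Fin n → K) (_ : ∀ i j, α i * β j = q i j * (α j * β i)) (i j : Fin n),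
      (α ⬝ᵥ A i) * (β ⬝ᵥ A j) = p i j * ((α ⬝ᵥ A j) * (β ⬝ᵥ A i)) := by
    intro α β h i j
    obtain ⟨t, ht⟩ := qrho_shape q α β h (y i)
    obtain ⟨s, hs⟩ := qrho_shape q α β h (y j)
    have e := congrArg (fun z => qrho q α β h z 0 2) (hyr i j)
    simp only [map_mul, map_smul, ht, hs] at e
    simp [Matrix.mul_apply, Fin.sum_univ_three] at e
    change a i * s + (α ⬝ᵥ A i) * (β ⬝ᵥ A j) + t * a j =
      p i j * (a j * t + ((α ⬝ᵥ A j) * (β ⬝ᵥ A i) + s * a i)) at e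
    by_cases hij : p i j = 1
    · rw [hij] at e ⊢
      push_cast at e ⊢
      linear_combination e
    · obtain ⟨h1, h2⟩ := ha0 i j hij
      rw [h1, h2] at e
      linear_combination e
  have hdiag : ∀ i j k, A i k * A j k = p i j * (A j k * A i k) := by
    intro i j k
    have := main (Pi.single k 1) (Pi.single k 1) (by
      intro i j
      by_cases hi : i = k <;> by_cases hj : j = k <;> simp [hi, hj, hq1]) i j
    simpa using this
  refine qaff_perm p q hq2 A hA ?_ ?_ hq1 hp1
  · intro i j k hij
    have h1 : (1 - (p i j : K)) ≠ 0 := by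
      intro h0
      exact hij (Units.ext (by simpa using (sub_eq_zero.1 h0).symm))
    apply mul_left_cancel₀ h1
    linear_combination hdiag i j k
  · intro i j k m hkm
    have hqk : (q k m : K) * q m k = 1 := by
      rw [← Units.val_mul, hq2 k m, Units.val_one]
    have := main (Pi.single k 1 + Pi.single m (q m k : K)) (Pi.single k 1 + Pi.single m 1) (by
      intro i j
      by_cases hi : i = k
      · subst hi
        by_cases hj : j = i
        · subst hj; simp [hq1]
        · by_cases hj' : j = m
          · subst hj'; simp [hkm, hkm.symm, hqk]
          · simp [hj, hj', hkm, hkm.symm]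
      · by_cases hi' : i = m
        · subst hi'
          by_cases hj : j = k
          · subst hj; simp [hkm, hkm.symm]
          · by_cases hj' : j = i
            · subst hj'; simp [hq1]
            · simp [hj, hj', hkm, hkm.symm]
        · simp [hi, hi']) i j
    simp [add_dotProduct] at this
    linear_combination this - hdiag i j k - (q m k : K) * hdiag i j m

/-- for multiplicatively antisymmetric `p, q`,
`O_p(K^n) ≅ O_q(K^n)` iff `p` is a permutation of `q`. -/
theorem qAff_iso_iff (K : Type*) [Field K] (n : ℕ) (hn : 1 ≤ n)
    (p q : Fin n → Fin n → Kˣ)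
    (hp1 : ∀ i, p i i = 1) (hp2 : ∀ i j, p i j * p j i = 1)
    (hq1 : ∀ i, q i i = 1) (hq2 : ∀ i j, q i j * q j i = 1) :
    Nonempty (QAff K n p ≃ₐ[K] QAff K n q) ↔
      ∃ σ : Equiv.Perm (Fin n), ∀ i j, p i j = q (σ i) (σ j) := by
  constructor
  · rintro ⟨φ⟩
    exact qaff_forward p q hp1 hq1 hq2 φ
  · rintro ⟨σ, hσ⟩
    refine ⟨AlgEquiv.ofAlgHom
      (qlift (fun i => qaffGen K n q (σ i)) (fun i j => by rw [hσ]; exact qgen_rel q _ _))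
      (qlift (fun i => qaffGen K n p (σ.symm i)) (fun i j => by
        have := qgen_rel p (σ.symm i) (σ.symm j)
        rw [hσ] at this
        simpa using this)) ?_ ?_⟩
    · apply qaff_hom_ext
      intro i
      simp [qlift_gen]
    · apply qaff_hom_ext
      intro i
      simp [qlift_gen]
end

section
/- Let K be a field and p, q ∈ Kˣ. The quantum planes O_p(K²) and O_q(K²) are isomorphic as K-algebras if and only if p = q or p = q⁻¹. -/
/-- The defining relation of the quantum plane `O_p(K²)`:
`x₁x₂ = p·x₂x₁`. -/
inductive QPlaneRel (K : Type*) [Field K] (p : K) :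
    FreeAlgebra K (Fin 2) → FreeAlgebra K (Fin 2) → Prop
  | rel : QPlaneRel K p (FreeAlgebra.ι K 0 * FreeAlgebra.ι K 1)
      (p • (FreeAlgebra.ι K 1 * FreeAlgebra.ι K 0))

/-- The quantum plane `O_p(K²)`. -/
abbrev QPlane (K : Type*) [Field K] (p : K) := RingQuot (QPlaneRel K p)

namespace QPlaneAux

variable {K : Type*} [Field K]

/-- The first and second generators of the quantum plane. -/
noncomputable def gen (p : K) (i : Fin 2) : QPlane K p :=
  RingQuot.mkAlgHom K (QPlaneRel K p) (FreeAlgebra.ι K i)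

theorem gen_rel (p : K) : gen p 0 * gen p 1 = p • (gen p 1 * gen p 0) := by
  have h := RingQuot.mkAlgHom_rel K (QPlaneRel.rel (K := K) (p := p))
  simpa [gen] using h

/-- Universal property. -/
noncomputable def lift (p : K) {A : Type*} [Ring A] [Algebra K A] (f : Fin 2 → A)
    (h : f 0 * f 1 = p • (f 1 * f 0)) : QPlane K p →ₐ[K] A :=
  RingQuot.liftAlgHom K ⟨FreeAlgebra.lift K f, by
    rintro _ _ ⟨⟩
    simpa using h⟩

theorem lift_gen (p : K) {A : Type*} [Ring A] [Algebra K A] (f : Fin 2 → A)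
    (h : f 0 * f 1 = p • (f 1 * f 0)) (i : Fin 2) : lift p f h (gen p i) = f i := by
  simp [lift, gen]

theorem hom_ext {p : K} {A : Type*} [Ring A] [Algebra K A] {f g : QPlane K p →ₐ[K] A}
    (h : ∀ i, f (gen p i) = g (gen p i)) : f = g := by
  apply RingQuot.ringQuot_ext'
  apply FreeAlgebra.hom_ext
  funext i
  exact h i

theorem swap_rel (p : Kˣ) : gen ((p⁻¹ : Kˣ) : K) 1 * gen ((p⁻¹ : Kˣ) : K) 0
    = (p : K) • (gen ((p⁻¹ : Kˣ) : K) 0 * gen ((p⁻¹ : Kˣ) : K) 1) := by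
  rw [gen_rel, smul_smul]
  simp

theorem swap_rel' (p : Kˣ) : gen (p : K) 1 * gen (p : K) 0
    = ((p⁻¹ : Kˣ) : K) • (gen (p : K) 0 * gen (p : K) 1) := by
  rw [gen_rel, smul_smul]
  simp

/-- The isomorphism swapping the generators. -/
noncomputable def swapEquiv (p : Kˣ) : QPlane K (p : K) ≃ₐ[K] QPlane K ((p⁻¹ : Kˣ) : K) :=
  AlgEquiv.ofAlgHom
    (lift (p : K) ![gen ((p⁻¹ : Kˣ) : K) 1, gen ((p⁻¹ : Kˣ) : K) 0]
      (by simpa only [Matrix.cons_val_zero, Matrix.cons_val_one] using swap_rel p))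
    (lift ((p⁻¹ : Kˣ) : K) ![gen (p : K) 1, gen (p : K) 0]
      (by simpa only [Matrix.cons_val_zero, Matrix.cons_val_one] using swap_rel' p))
    (by
      apply hom_ext
      intro i
      rw [AlgHom.comp_apply, lift_gen, AlgHom.id_apply]
      fin_cases i
      · exact lift_gen _ _ _ 1
      · exact lift_gen _ _ _ 0)
    (by
      apply hom_ext
      intro i
      rw [AlgHom.comp_apply, lift_gen, AlgHom.id_apply]
      fin_cases i
      · exact lift_gen _ _ _ 1
      · exact lift_gen _ _ _ 0)

/-- Upper triangular matrices, constant on the diagonal. -/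
def T (x y z w : K) : Matrix (Fin 3) (Fin 3) K := !![x, y, w; 0, x, z; 0, 0, x]

theorem T_mul (x y z w x' y' z' w' : K) : T x y z w * T x' y' z' w' =
    T (x * x') (x * y' + y * x') (x * z' + z * x') (x * w' + y * z' + w * x') := by
  ext i j
  fin_cases i <;> fin_cases j <;> simp [T, Matrix.mul_apply, Fin.sum_univ_three]

theorem T_add (x y z w x' y' z' w' : K) : T x y z w + T x' y' z' w' =
    T (x + x') (y + y') (z + z') (w + w') := by
  ext i j
  fin_cases i <;> fin_cases j <;> simp [T]

theorem T_smul (c x y z w : K) : c • T x y z w = T (c * x) (c * y) (c * z) (c * w) := by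
  ext i j
  fin_cases i <;> fin_cases j <;> simp [T]

theorem T_algebraMap (c : K) : algebraMap K (Matrix (Fin 3) (Fin 3) K) c = T c 0 0 0 := by
  ext i j
  fin_cases i <;> fin_cases j <;> simp [T, Matrix.algebraMap_matrix_apply]

theorem T_inj {x y z w x' y' z' w' : K} (h : T x y z w = T x' y' z' w') :
    x = x' ∧ y = y' ∧ z = z' ∧ w = w' := by
  refine ⟨?_, ?_, ?_, ?_⟩
  · simpa [T] using congrFun (congrFun h 0) 0
  · simpa [T] using congrFun (congrFun h 0) 1
  · simpa [T] using congrFun (congrFun h 1) 2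
  · simpa [T] using congrFun (congrFun h 0) 2

/-- The linear part of any element lies in the span of the linear parts of the generators. -/
theorem linear_part {p : K} (q : K) (F : K → K → (QPlane K p →ₐ[K] Matrix (Fin 3) (Fin 3) K))
    (α a b : Fin 2 → K)
    (hF : ∀ i s t, ∃ e, F s t (gen p i) = T (α i) (s * a i + t * b i) (s * a i + q * t * b i) e)
    (u : QPlane K p) :
    ∃ x l m : K, ∀ s t, ∃ e, F s t u = T x (s * (l * a 0 + m * a 1) + t * (l * b 0 + m * b 1))
      (s * (l * a 0 + m * a 1) + q * t * (l * b 0 + m * b 1)) e := by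
  obtain ⟨w, rfl⟩ := RingQuot.mkAlgHom_surjective K (QPlaneRel K p) u
  induction w using FreeAlgebra.induction with
  | grade0 r =>
    refine ⟨r, 0, 0, fun s t => ⟨0, ?_⟩⟩
    rw [AlgHom.commutes, AlgHom.commutes, T_algebraMap]
    simp
  | grade1 i =>
    fin_cases i
    · refine ⟨α 0, 1, 0, fun s t => ?_⟩
      simpa [gen] using hF 0 s t
    · refine ⟨α 1, 0, 1, fun s t => ?_⟩
      simpa [gen] using hF 1 s t
  | mul u v hu hv =>
    obtain ⟨x, l, m, h⟩ := hu
    obtain ⟨x', l', m', h'⟩ := hv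
    refine ⟨x * x', x * l' + l * x', x * m' + m * x', fun s t => ?_⟩
    obtain ⟨e, h⟩ := h s t
    obtain ⟨e', h'⟩ := h' s t
    rw [map_mul, map_mul, h, h', T_mul]
    refine ⟨_, congr (congr (congr (congrArg T rfl) ?_) ?_) rfl⟩ <;> ring
  | add u v hu hv =>
    obtain ⟨x, l, m, h⟩ := hu
    obtain ⟨x', l', m', h'⟩ := hv
    refine ⟨x + x', l + l', m + m', fun s t => ?_⟩
    obtain ⟨e, h⟩ := h s t
    obtain ⟨e', h'⟩ := h' s t
    rw [map_add, map_add, h, h', T_add]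
    refine ⟨_, congr (congr (congr (congrArg T rfl) ?_) ?_) rfl⟩ <;> ring

/-- The test representations. -/
noncomputable def rep (q s t : K) : QPlane K q →ₐ[K] Matrix (Fin 3) (Fin 3) K :=
  lift q ![T 0 s s 0, T 0 t (q * t) 0] (by
    simp only [Matrix.cons_val_zero, Matrix.cons_val_one, T_mul, T_smul]
    congr 1 <;> ring)

theorem rep_zero (q s t : K) : rep q s t (gen q 0) = T 0 s s 0 := by
  simp [rep, lift_gen]

theorem rep_one (q s t : K) : rep q s t (gen q 1) = T 0 t (q * t) 0 := by
  simp [rep, lift_gen]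

theorem rep_form (q : K) (u : QPlane K q) : ∃ x l m : K, ∀ s t, ∃ e,
    rep q s t u = T x (s * l + t * m) (s * l + q * t * m) e := by
  have h := linear_part (p := q) q (rep q) ![0, 0] ![1, 0] ![0, 1] (by
    intro i s t
    refine ⟨0, ?_⟩
    fin_cases i
    · simp [rep_zero]
    · simp [rep_one]) u
  simpa using h

theorem main {p q : K} (hp : p ≠ 1) (hq : q ≠ 0) (e : QPlane K p ≃ₐ[K] QPlane K q) :
    p = q ∨ p * q = 1 := by
  choose α a b h using fun i => rep_form q (e (gen p i))
  have hsurj := linear_part q (fun s t => (rep q s t).comp e.toAlgHom) α a b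
    (fun i s t => h i s t)
  obtain ⟨_, l, m, h0⟩ := hsurj (e.symm (gen q 0))
  obtain ⟨_, l', m', h1⟩ := hsurj (e.symm (gen q 1))
  have s0 : e.toAlgHom (e.symm (gen q 0)) = gen q 0 := e.apply_symm_apply _
  have s1 : e.toAlgHom (e.symm (gen q 1)) = gen q 1 := e.apply_symm_apply _
  simp only [AlgHom.comp_apply, s0, s1, rep_zero, rep_one] at h0 h1
  have k1 : l * a 0 + m * a 1 = 1 := by
    obtain ⟨_, h⟩ := h0 1 0
    simpa using (T_inj h).2.1.symm
  have k2 : l * b 0 + m * b 1 = 0 := by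
    obtain ⟨_, h⟩ := h0 0 1
    simpa using (T_inj h).2.1.symm
  have k3 : l' * a 0 + m' * a 1 = 0 := by
    obtain ⟨_, h⟩ := h1 1 0
    simpa using (T_inj h).2.1.symm
  have k4 : l' * b 0 + m' * b 1 = 1 := by
    obtain ⟨_, h⟩ := h1 0 1
    simpa using (T_inj h).2.1.symm
  have hdet : a 0 * b 1 - a 1 * b 0 ≠ 0 := by
    intro hd
    have : (l * m' - m * l') * (a 0 * b 1 - a 1 * b 0) = 1 := by
      linear_combination k1 * (l' * b 0 + m' * b 1) + k4 - k2 * (l' * a 0 + m' * a 1)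
    rw [hd] at this
    simp at this
  have hrel : ∀ s t, rep q s t (e (gen p 0)) * rep q s t (e (gen p 1)) =
      p • (rep q s t (e (gen p 1)) * rep q s t (e (gen p 0))) := by
    intro s t
    rw [← map_mul, ← map_mul, gen_rel, map_smul, map_smul, map_mul, map_mul]
  have hp' : 1 - p ≠ 0 := sub_ne_zero.mpr (Ne.symm hp)
  have key : ∀ s t, α 0 * (s * a 1 + t * b 1) + α 1 * (s * a 0 + t * b 0) = 0 ∧
      (α 0 = 0 → α 1 = 0 → (s * a 0 + t * b 0) * (s * a 1 + q * t * b 1) =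
        p * ((s * a 1 + t * b 1) * (s * a 0 + q * t * b 0))) := by
    intro s t
    obtain ⟨e0, h0⟩ := h 0 s t
    obtain ⟨e1, h1⟩ := h 1 s t
    have hr := hrel s t
    rw [h0, h1, T_mul, T_mul, T_smul] at hr
    obtain ⟨r1, r2, r3, r4⟩ := T_inj hr
    refine ⟨?_, ?_⟩
    · apply (mul_eq_zero.mp _).resolve_left hp'
      linear_combination r2
    · intro z0 z1
      rw [z0, z1] at r4
      linear_combination r4
  have c1 := (key 1 0).1
  have c2 := (key 0 1).1
  have z0 : α 0 = 0 := by
    apply (mul_eq_zero.mp _).resolve_right hdet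
    linear_combination a 0 * c2 - b 0 * c1
  have z1 : α 1 = 0 := by
    apply (mul_eq_zero.mp _).resolve_right hdet
    linear_combination b 1 * c1 - a 1 * c2
  have d1 := (key 1 0).2 z0 z1
  have d2 := (key 0 1).2 z0 z1
  have d3 := (key 1 1).2 z0 z1
  have f1 : a 0 * a 1 = 0 := by
    apply (mul_eq_zero.mp _).resolve_left hp'
    linear_combination d1
  have f3 : q * (a 0 * b 1) + b 0 * a 1 = p * (a 0 * b 1 + q * (b 0 * a 1)) := by
    linear_combination d3 - d1 - d2
  have f2 : q * (b 0 * b 1) = 0 := by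
    apply (mul_eq_zero.mp _).resolve_left hp'
    linear_combination d2
  have f2' := (mul_eq_zero.mp f2).resolve_left hq
  by_cases ha : a 0 = 0
  · have hb : b 0 ≠ 0 := by
      intro hb
      exact hdet (by rw [ha, hb]; ring)
    have hb1 : b 1 = 0 := (mul_eq_zero.mp f2').resolve_left hb
    have ha1 : a 1 ≠ 0 := by
      intro h1
      exact hdet (by rw [ha, h1]; ring)
    right
    rw [ha, hb1] at f3
    apply mul_right_cancel₀ (mul_ne_zero hb ha1)
    linear_combination -f3
  · have ha1 : a 1 = 0 := (mul_eq_zero.mp f1).resolve_left ha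
    have hb1 : b 1 ≠ 0 := by
      intro h1
      exact hdet (by rw [ha1, h1]; ring)
    left
    rw [ha1] at f3
    apply mul_right_cancel₀ (mul_ne_zero ha hb1)
    linear_combination -f3

end QPlaneAux

/-- `O_p(K²) ≅ O_q(K²)` iff `p = q` or `p = q⁻¹`. -/
theorem qPlane_iso_iff (K : Type*) [Field K] (p q : Kˣ) :
    Nonempty (QPlane K (p : K) ≃ₐ[K] QPlane K (q : K)) ↔ (p = q ∨ p = q⁻¹) := by
  constructor
  · rintro ⟨e⟩
    by_cases hp : (p : K) = 1
    · by_cases hq : (q : K) = 1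
      · left
        exact Units.ext (hp.trans hq.symm)
      · rcases QPlaneAux.main hq p.ne_zero e.symm with h | h
        · exact Or.inl (Units.ext h.symm)
        · right
          apply eq_inv_of_mul_eq_one_right
          exact Units.ext (by simpa using h)
    · rcases QPlaneAux.main hp q.ne_zero e with h | h
      · exact Or.inl (Units.ext h)
      · right
        apply eq_inv_of_mul_eq_one_left
        exact Units.ext (by simpa using h)
  · rintro (rfl | rfl)
    · exact ⟨AlgEquiv.refl⟩
    · exact ⟨(QPlaneAux.swapEquiv q).symm⟩
end

section
/- Let K be a field and λ, q ∈ Kˣ. Then R(q⁻¹, λ⁻¹q, λ⁻¹q², 1) is isomorphic as a K-algebra to the multi-parameter quantum matrix algebra O_{λ,q}(M_2(K)); an isomorphism is given by x₁ ↦ λq⁻¹·X₁₂, x₂ ↦ X₂₂, x₃ ↦ X₂₁, x₄ ↦ X₁₁. -/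
/-- The defining relations of Jordan's ambiskew polynomial ring `R(a,b,p₁,p₂)`,
with generators `x₁ = ι 0`, `x₂ = ι 1`, `x₃ = ι 2`, `x₄ = ι 3`:
`x₄x₁ = a·x₁x₄`, `x₂x₁ = p₁⁻¹a⁻¹·x₁x₂`, `x₁x₃ = p₁·x₃x₁`, `x₄x₃ = b·x₃x₄`,
`x₂x₃ = p₁b⁻¹·x₃x₂`, `x₂x₄ = p₂·x₄x₂ + (1 - p₂ab)·x₁x₃`. -/
inductive AmbRel (K : Type*) [Field K] (a b p₁ p₂ : K) :
    FreeAlgebra K (Fin 4) → FreeAlgebra K (Fin 4) → Prop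
  | r41 : AmbRel K a b p₁ p₂ (FreeAlgebra.ι K 3 * FreeAlgebra.ι K 0)
      (a • (FreeAlgebra.ι K 0 * FreeAlgebra.ι K 3))
  | r21 : AmbRel K a b p₁ p₂ (FreeAlgebra.ι K 1 * FreeAlgebra.ι K 0)
      ((p₁⁻¹ * a⁻¹) • (FreeAlgebra.ι K 0 * FreeAlgebra.ι K 1))
  | r13 : AmbRel K a b p₁ p₂ (FreeAlgebra.ι K 0 * FreeAlgebra.ι K 2)
      (p₁ • (FreeAlgebra.ι K 2 * FreeAlgebra.ι K 0))
  | r43 : AmbRel K a b p₁ p₂ (FreeAlgebra.ι K 3 * FreeAlgebra.ι K 2)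
      (b • (FreeAlgebra.ι K 2 * FreeAlgebra.ι K 3))
  | r23 : AmbRel K a b p₁ p₂ (FreeAlgebra.ι K 1 * FreeAlgebra.ι K 2)
      ((p₁ * b⁻¹) • (FreeAlgebra.ι K 2 * FreeAlgebra.ι K 1))
  | r24 : AmbRel K a b p₁ p₂ (FreeAlgebra.ι K 1 * FreeAlgebra.ι K 3)
      (p₂ • (FreeAlgebra.ι K 3 * FreeAlgebra.ι K 1) +
        (1 - p₂ * a * b) • (FreeAlgebra.ι K 0 * FreeAlgebra.ι K 2))

/-- Jordan's ambiskew polynomial ring `R(a,b,p₁,p₂)`. -/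
abbrev Ambiskew (K : Type*) [Field K] (a b p₁ p₂ : K) := RingQuot (AmbRel K a b p₁ p₂)

/-- The images of the four free generators in `R(a,b,p₁,p₂)`;
`agen K a b p₁ p₂ i` is the generator `x_{i+1}`. -/
noncomputable def agen (K : Type*) [Field K] (a b p₁ p₂ : K) (i : Fin 4) :
    Ambiskew K a b p₁ p₂ :=
  RingQuot.mkAlgHom K (AmbRel K a b p₁ p₂) (FreeAlgebra.ι K i)

/-- The defining relations of the multi-parameter quantum matrix algebra
`O_{λ,q}(M₂(K))`, with generators `X₁₁ = ι 0`, `X₁₂ = ι 1`, `X₂₁ = ι 2`,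
`X₂₂ = ι 3`:
`X₁₂X₁₁ = q·X₁₁X₁₂`, `X₂₂X₂₁ = q·X₂₁X₂₂`, `X₂₁X₁₁ = λq⁻¹·X₁₁X₂₁`,
`X₂₂X₁₂ = λq⁻¹·X₁₂X₂₂`, `X₂₁X₁₂ = λq⁻²·X₁₂X₂₁`,
`X₂₂X₁₁ = X₁₁X₂₂ + (λ-1)q⁻¹·X₁₂X₂₁`. -/
inductive MultiQMatRel (K : Type*) [Field K] (lam q : K) :
    FreeAlgebra K (Fin 4) → FreeAlgebra K (Fin 4) → Prop
  | r1 : MultiQMatRel K lam q (FreeAlgebra.ι K 1 * FreeAlgebra.ι K 0)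
      (q • (FreeAlgebra.ι K 0 * FreeAlgebra.ι K 1))
  | r2 : MultiQMatRel K lam q (FreeAlgebra.ι K 3 * FreeAlgebra.ι K 2)
      (q • (FreeAlgebra.ι K 2 * FreeAlgebra.ι K 3))
  | r3 : MultiQMatRel K lam q (FreeAlgebra.ι K 2 * FreeAlgebra.ι K 0)
      ((lam * q⁻¹) • (FreeAlgebra.ι K 0 * FreeAlgebra.ι K 2))
  | r4 : MultiQMatRel K lam q (FreeAlgebra.ι K 3 * FreeAlgebra.ι K 1)
      ((lam * q⁻¹) • (FreeAlgebra.ι K 1 * FreeAlgebra.ι K 3))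
  | r5 : MultiQMatRel K lam q (FreeAlgebra.ι K 2 * FreeAlgebra.ι K 1)
      ((lam * (q ^ 2)⁻¹) • (FreeAlgebra.ι K 1 * FreeAlgebra.ι K 2))
  | r6 : MultiQMatRel K lam q (FreeAlgebra.ι K 3 * FreeAlgebra.ι K 0)
      (FreeAlgebra.ι K 0 * FreeAlgebra.ι K 3 +
        ((lam - 1) * q⁻¹) • (FreeAlgebra.ι K 1 * FreeAlgebra.ι K 2))

/-- The multi-parameter quantum matrix algebra `O_{λ,q}(M₂(K))`. -/
abbrev MultiQMat (K : Type*) [Field K] (lam q : K) := RingQuot (MultiQMatRel K lam q)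

/-- The images of the generators in `O_{λ,q}(M₂(K))`: `mgen K lam q 0 = X₁₁`,
`mgen K lam q 1 = X₁₂`, `mgen K lam q 2 = X₂₁`, `mgen K lam q 3 = X₂₂`. -/
noncomputable def mgen (K : Type*) [Field K] (lam q : K) (i : Fin 4) : MultiQMat K lam q :=
  RingQuot.mkAlgHom K (MultiQMatRel K lam q) (FreeAlgebra.ι K i)

theorem mgen_rels (K : Type*) [Field K] (l q : K) :
    mgen K l q 1 * mgen K l q 0 = q • (mgen K l q 0 * mgen K l q 1) ∧
    mgen K l q 3 * mgen K l q 2 = q • (mgen K l q 2 * mgen K l q 3) ∧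
    mgen K l q 2 * mgen K l q 0 = (l * q⁻¹) • (mgen K l q 0 * mgen K l q 2) ∧
    mgen K l q 3 * mgen K l q 1 = (l * q⁻¹) • (mgen K l q 1 * mgen K l q 3) ∧
    mgen K l q 2 * mgen K l q 1 = (l * (q ^ 2)⁻¹) • (mgen K l q 1 * mgen K l q 2) ∧
    mgen K l q 3 * mgen K l q 0 = mgen K l q 0 * mgen K l q 3 +
      ((l - 1) * q⁻¹) • (mgen K l q 1 * mgen K l q 2) := by
  refine ⟨?_, ?_, ?_, ?_, ?_, ?_⟩
  · simpa [mgen] using RingQuot.mkAlgHom_rel K (MultiQMatRel.r1 (lam := l) (q := q))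
  · simpa [mgen] using RingQuot.mkAlgHom_rel K (MultiQMatRel.r2 (lam := l) (q := q))
  · simpa only [mgen, map_mul, map_smul, map_add] using
      RingQuot.mkAlgHom_rel K (MultiQMatRel.r3 (lam := l) (q := q))
  · simpa only [mgen, map_mul, map_smul, map_add] using
      RingQuot.mkAlgHom_rel K (MultiQMatRel.r4 (lam := l) (q := q))
  · simpa only [mgen, map_mul, map_smul, map_add] using
      RingQuot.mkAlgHom_rel K (MultiQMatRel.r5 (lam := l) (q := q))
  · simpa only [mgen, map_mul, map_smul, map_add] using
      RingQuot.mkAlgHom_rel K (MultiQMatRel.r6 (lam := l) (q := q))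

theorem agen_rels (K : Type*) [Field K] (a b c d : K) :
    agen K a b c d 3 * agen K a b c d 0 = a • (agen K a b c d 0 * agen K a b c d 3) ∧
    agen K a b c d 1 * agen K a b c d 0 =
      (c⁻¹ * a⁻¹) • (agen K a b c d 0 * agen K a b c d 1) ∧
    agen K a b c d 0 * agen K a b c d 2 = c • (agen K a b c d 2 * agen K a b c d 0) ∧
    agen K a b c d 3 * agen K a b c d 2 = b • (agen K a b c d 2 * agen K a b c d 3) ∧
    agen K a b c d 1 * agen K a b c d 2 =
      (c * b⁻¹) • (agen K a b c d 2 * agen K a b c d 1) ∧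
    agen K a b c d 1 * agen K a b c d 3 = d • (agen K a b c d 3 * agen K a b c d 1) +
      (1 - d * a * b) • (agen K a b c d 0 * agen K a b c d 2) := by
  simp only [agen, ← map_mul, ← map_smul, ← map_add]
  exact ⟨RingQuot.mkAlgHom_rel K .r41, RingQuot.mkAlgHom_rel K .r21,
    RingQuot.mkAlgHom_rel K .r13, RingQuot.mkAlgHom_rel K .r43,
    RingQuot.mkAlgHom_rel K .r23, RingQuot.mkAlgHom_rel K .r24⟩

/-- The forward map. -/
noncomputable def ambToMat (K : Type*) [Field K] (l q : K) (hl : l ≠ 0) (hq : q ≠ 0) :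
    Ambiskew K (q⁻¹) (l⁻¹ * q) (l⁻¹ * q ^ 2) 1 →ₐ[K] MultiQMat K l q :=
  RingQuot.liftAlgHom K ⟨FreeAlgebra.lift K
    ![(l * q⁻¹) • mgen K l q 1, mgen K l q 3, mgen K l q 2, mgen K l q 0], by
      obtain ⟨h1, h2, h3, h4, h5, h6⟩ := mgen_rels K l q
      intro x y h
      cases h <;> simp [h1, h2, h3, h4, h5, h6, smul_smul, -mul_eq_mul_left_iff] <;>
        congr 1 <;> field_simp <;> simp⟩

/-- The backward map. -/
noncomputable def matToAmb (K : Type*) [Field K] (l q : K) (hl : l ≠ 0) (hq : q ≠ 0) :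
    MultiQMat K l q →ₐ[K] Ambiskew K (q⁻¹) (l⁻¹ * q) (l⁻¹ * q ^ 2) 1 :=
  RingQuot.liftAlgHom K ⟨FreeAlgebra.lift K
    ![agen K (q⁻¹) (l⁻¹ * q) (l⁻¹ * q ^ 2) 1 3,
      (l⁻¹ * q) • agen K (q⁻¹) (l⁻¹ * q) (l⁻¹ * q ^ 2) 1 0,
      agen K (q⁻¹) (l⁻¹ * q) (l⁻¹ * q ^ 2) 1 2,
      agen K (q⁻¹) (l⁻¹ * q) (l⁻¹ * q ^ 2) 1 1], by
      obtain ⟨h1, h2, h3, h4, h5, h6⟩ := agen_rels K (q⁻¹) (l⁻¹ * q) (l⁻¹ * q ^ 2) 1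
      intro x y h
      cases h <;> simp [h1, h2, h3, h4, h5, h6, smul_smul] <;>
        congr 1 <;> field_simp <;> simp⟩

/-- `R(q⁻¹, λ⁻¹q, λ⁻¹q², 1) ≅ O_{λ,q}(M₂(K))` via
`x₁ ↦ λq⁻¹·X₁₂`, `x₂ ↦ X₂₂`, `x₃ ↦ X₂₁`, `x₄ ↦ X₁₁`. -/
theorem ambiskew_iso_multiQMat (K : Type*) [Field K] (lam q : Kˣ) :
    ∃ Φ : Ambiskew K ((q : K)⁻¹) ((lam : K)⁻¹ * (q : K)) ((lam : K)⁻¹ * (q : K) ^ 2) 1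
        ≃ₐ[K] MultiQMat K (lam : K) (q : K),
      Φ (agen K ((q : K)⁻¹) ((lam : K)⁻¹ * (q : K)) ((lam : K)⁻¹ * (q : K) ^ 2) 1 0) =
        ((lam : K) * (q : K)⁻¹) • mgen K (lam : K) (q : K) 1 ∧
      Φ (agen K ((q : K)⁻¹) ((lam : K)⁻¹ * (q : K)) ((lam : K)⁻¹ * (q : K) ^ 2) 1 1) =
        mgen K (lam : K) (q : K) 3 ∧
      Φ (agen K ((q : K)⁻¹) ((lam : K)⁻¹ * (q : K)) ((lam : K)⁻¹ * (q : K) ^ 2) 1 2) =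
        mgen K (lam : K) (q : K) 2 ∧
      Φ (agen K ((q : K)⁻¹) ((lam : K)⁻¹ * (q : K)) ((lam : K)⁻¹ * (q : K) ^ 2) 1 3) =
        mgen K (lam : K) (q : K) 0 := by
  have hl : (lam : K) ≠ 0 := lam.ne_zero
  have hq : (q : K) ≠ 0 := q.ne_zero
  generalize (lam : K) = l at *
  generalize (q : K) = q at *
  have e1 : l⁻¹ * q * (l * q⁻¹) = 1 := by field_simp
  have e2 : l * q⁻¹ * (l⁻¹ * q) = 1 := by field_simp
  refine ⟨AlgEquiv.ofAlgHom (ambToMat K l q hl hq) (matToAmb K l q hl hq) ?_ ?_, ?_, ?_, ?_, ?_⟩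
  · ext i
    fin_cases i
    · simp [matToAmb, ambToMat, mgen, agen]
    · simp [matToAmb, ambToMat, mgen, agen, smul_smul, e1]
    · simp [matToAmb, ambToMat, mgen, agen]
    · simp [matToAmb, ambToMat, mgen, agen]
  · ext i
    fin_cases i
    · simp [matToAmb, ambToMat, mgen, agen, smul_smul, e2]
    · simp [matToAmb, ambToMat, mgen, agen]
    · simp [matToAmb, ambToMat, mgen, agen]
    · simp [matToAmb, ambToMat, mgen, agen]
  all_goals simp [ambToMat, agen]
end
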